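/- Let V_1, …, V_n be H-modules, each finite-dimensional over F and indecomposable, and suppose every indecomposable H-module that is finite-dimensional over F is isomorphic to some V_i. Then for all m, s : Fin n → ℕ and every H-linear map f : V^(s) → V^(m), there exist t : Fin n → ℕ, a surjective H-linear map h : V^(s) → V^(t), and an injective H-linear map g : V^(t) → V^(m) such that f = g ∘ h. -/

import Mathlib

/-!
A linear map factors through its range as a surjection followed by an injection, so it suffices to
decompose the range. By the descending chain condition, splitting an Artinian module into
complementary proper submodules again and again terminates, which exhibits it as a finite direct
sum of indecomposable submodules. Each summand is isomorphic to a member of the given family, and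
collecting isomorphic summands gives the multiplicities.
-/

/-- An `H`-module `M` is indecomposable if it is nonzero and whenever `p` and `q` are
complementary submodules, one of them is trivial. -/
def IsIndecomposableModule (H : Type*) [Ring H] (M : Type*) [AddCommGroup M]
    [Module H M] : Prop :=
  (∃ x : M, x ≠ 0) ∧
    ∀ p q : Submodule H M, p ⊓ q = ⊥ → p ⊔ q = ⊤ → p = ⊥ ∨ q = ⊥

instance finite_submodule_of_isScalarTower {R S M : Type*} [Semiring R] [Semiring S] [SMul R S]
    [AddCommMonoid M] [Module R M] [Module S M] [IsScalarTower R S M] [IsNoetherian R M]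
    (p : Submodule S M) : Module.Finite R p :=
  inferInstanceAs (Module.Finite R (p.restrictScalars R))

section Decomposition

variable {H M : Type*} [Ring H] [AddCommGroup M] [Module H M]

theorem exists_isCompl_lt_top_of_not_isIndecomposableModule [Nontrivial M]
    (hM : ¬ IsIndecomposableModule H M) :
    ∃ a b : Submodule H M, IsCompl a b ∧ a < ⊤ ∧ b < ⊤ := by
  obtain ⟨a, b, hinf, hsup, ha, hb⟩ :
      ∃ a b : Submodule H M, a ⊓ b = ⊥ ∧ a ⊔ b = ⊤ ∧ a ≠ ⊥ ∧ b ≠ ⊥ := by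
    by_contra! hcon
    exact hM ⟨exists_ne 0, fun a b hinf hsup => or_iff_not_imp_left.2 (hcon a b hinf hsup)⟩
  have hab : IsCompl a b := ⟨disjoint_iff.2 hinf, codisjoint_iff.2 hsup⟩
  exact ⟨a, b, hab, lt_top_iff_ne_top.2 fun h => hb (eq_bot_of_top_isCompl (h ▸ hab)),
    lt_top_iff_ne_top.2 fun h => ha (eq_bot_of_isCompl_top (h ▸ hab))⟩

theorem exists_disjoint_sup_eq_of_not_isIndecomposableModule {p : Submodule H M} (hp : p ≠ ⊥)
    (hind : ¬ IsIndecomposableModule H p) :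
    ∃ a < p, ∃ b < p, Disjoint a b ∧ a ⊔ b = p := by
  have : Nontrivial p := Submodule.nontrivial_iff_ne_bot.2 hp
  obtain ⟨a, b, hab, ha, hb⟩ := exists_isCompl_lt_top_of_not_isIndecomposableModule hind
  have map_lt {c : Submodule H p} (hc : c < ⊤) : c.map p.subtype < p := by
    simpa only [Submodule.map_subtype_top] using
      Submodule.map_strictMono_of_injective p.injective_subtype hc
  refine ⟨a.map p.subtype, map_lt ha, b.map p.subtype, map_lt hb,
    Submodule.disjoint_map p.injective_subtype hab.disjoint, ?_⟩
  rw [← Submodule.map_sup, hab.sup_eq_top, Submodule.map_subtype_top]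

theorem exists_finset_supIndep_isIndecomposableModule [IsArtinian H M] (p : Submodule H M) :
    ∃ s : Finset (Submodule H M),
      (∀ q ∈ s, IsIndecomposableModule H q) ∧ s.SupIndep id ∧ s.sup id = p := by
  classical
  induction p using WellFoundedLT.induction with
  | ind p ih =>
    by_cases hind : IsIndecomposableModule H p
    · exact ⟨{p}, by simpa using hind, Finset.supIndep_singleton p id, Finset.sup_singleton⟩
    by_cases hp : p = ⊥
    · exact ⟨∅, by simp, Finset.supIndep_empty id, by simp [hp]⟩
    obtain ⟨a, ha, b, hb, hab, rfl⟩ :=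
      exists_disjoint_sup_eq_of_not_isIndecomposableModule hp hind
    obtain ⟨s, hs, hs_indep, rfl⟩ := ih a ha
    obtain ⟨t, ht, ht_indep, rfl⟩ := ih b hb
    exact ⟨s ∪ t, fun q hq => (Finset.mem_union.1 hq).elim (hs q) (ht q),
      hs_indep.union ht_indep hab, Finset.sup_union⟩

variable (H M) in
theorem exists_finset_isInternal_isIndecomposableModule [IsArtinian H M] :
    ∃ s : Finset (Submodule H M), (∀ q ∈ s, IsIndecomposableModule H q) ∧
      DirectSum.IsInternal fun q : s => q.1 := by
  obtain ⟨s, hs, hs_indep, hs_sup⟩ :=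
    exists_finset_supIndep_isIndecomposableModule (⊤ : Submodule H M)
  refine ⟨s, hs, DirectSum.isInternal_submodule_of_iSupIndep_of_iSup_eq_top
    (iSupIndep_comp_coe_iff_supIndep.2 hs_indep) ?_⟩
  simp only [← hs_sup, Finset.sup_eq_iSup, iSup_subtype', id]

end Decomposition

section Multiplicity

open scoped DirectSum

theorem exists_equiv_sigma_fin_fst_eq {J I : Type*} [Finite J] (c : J → I) :
    ∃ (t : I →₀ ℕ) (r : J ≃ Σ i, Fin (t i)), ∀ j, (r j).1 = c j := by
  have hfin : (fun i => Nat.card {j // c j = i}).support.Finite :=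
    (Set.finite_range c).subset fun i hi => by
      obtain ⟨j, hj⟩ := (Nat.card_ne_zero.1 hi).1
      exact ⟨j, hj⟩
  exact ⟨Finsupp.ofSupportFinite _ hfin, (Equiv.sigmaFiberEquiv c).symm.trans
    (Equiv.sigmaCongrRight fun i => Finite.equivFin {j // c j = i}), fun _ => rfl⟩

variable {H I : Type*} [Ring H] (V : I → Type*) [∀ i, AddCommGroup (V i)] [∀ i, Module H (V i)]

theorem exists_linearEquiv_directSum_sigma_fin {J : Type*} [Finite J] (c : J → I) :
    ∃ t : I →₀ ℕ, Nonempty ((⨁ j, V (c j)) ≃ₗ[H] ⨁ p : Σ i, Fin (t i), V p.1) := by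
  obtain ⟨t, r, hr⟩ := exists_equiv_sigma_fin_fst_eq c
  obtain rfl : (fun j => (r j).1) = c := funext hr
  let e := DirectSum.lequivCongrLeft H (M := fun p : Σ i, Fin (t i) => V p.1) r.symm
  exact ⟨t, ⟨e.symm⟩⟩

theorem exists_linearEquiv_directSum_of_isArtinian (M : Type*) [AddCommGroup M] [Module H M]
    [IsArtinian H M]
    (hV : ∀ W : Submodule H M, IsIndecomposableModule H W → ∃ i, Nonempty (W ≃ₗ[H] V i)) :
    ∃ t : I →₀ ℕ, Nonempty (M ≃ₗ[H] ⨁ p : Σ i, Fin (t i), V p.1) := by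
  classical
  obtain ⟨s, hs, hs_internal⟩ := exists_finset_isInternal_isIndecomposableModule H M
  choose c hc using fun q : s => hV q (hs q q.2)
  obtain ⟨t, ⟨e⟩⟩ := exists_linearEquiv_directSum_sigma_fin (H := H) V c
  let decomp : (⨁ q : s, q.1) ≃ₗ[H] M :=
    LinearEquiv.ofBijective (DirectSum.coeLinearMap fun q : s => q.1) hs_internal
  exact ⟨t, ⟨decomp.symm ≪≫ₗ DirectSum.congrLinearEquiv (fun q => (hc q).some) ≪≫ₗ e⟩⟩

theorem stmt11_general {M N : Type*} [AddCommGroup M] [Module H M] [AddCommGroup N] [Module H N]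
    (f : M →ₗ[H] N) [IsArtinian H f.range]
    (hV : ∀ W : Submodule H f.range, IsIndecomposableModule H W → ∃ i, Nonempty (W ≃ₗ[H] V i)) :
    ∃ (t : I →₀ ℕ) (h : M →ₗ[H] ⨁ p : Σ i, Fin (t i), V p.1)
      (g : (⨁ p : Σ i, Fin (t i), V p.1) →ₗ[H] N),
      Function.Surjective h ∧ Function.Injective g ∧ f = g.comp h := by
  obtain ⟨t, ⟨e⟩⟩ := exists_linearEquiv_directSum_of_isArtinian V f.range hV
  refine ⟨t, e.toLinearMap ∘ₗ f.rangeRestrict, f.range.subtype ∘ₗ e.symm.toLinearMap,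
    e.surjective.comp f.surjective_rangeRestrict,
    f.range.injective_subtype.comp e.symm.injective, ?_⟩
  ext x
  simp

end Multiplicity

theorem stmt11.{u} (F : Type*) [Field F] (H : Type*) [Ring H] [Algebra F H]
    (n : ℕ) (V : Fin n → Type u)
    [∀ i, AddCommGroup (V i)] [∀ i, Module H (V i)]
    [∀ i, Module F (V i)] [∀ i, IsScalarTower F H (V i)]
    [∀ i, FiniteDimensional F (V i)]
    (hind : ∀ i, IsIndecomposableModule H (V i))
    (hall : ∀ (W : Type u) [AddCommGroup W] [Module H W] [Module F W]
      [IsScalarTower F H W] [FiniteDimensional F W],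
      IsIndecomposableModule H W → ∃ i : Fin n, Nonempty (W ≃ₗ[H] V i))
    (m s : Fin n → ℕ)
    (f : (DirectSum (Σ i : Fin n, Fin (s i)) fun p => V p.1) →ₗ[H]
      (DirectSum (Σ i : Fin n, Fin (m i)) fun p => V p.1)) :
    ∃ (t : Fin n → ℕ)
      (h : (DirectSum (Σ i : Fin n, Fin (s i)) fun p => V p.1) →ₗ[H]
        (DirectSum (Σ i : Fin n, Fin (t i)) fun p => V p.1))
      (g : (DirectSum (Σ i : Fin n, Fin (t i)) fun p => V p.1) →ₗ[H]
        (DirectSum (Σ i : Fin n, Fin (m i)) fun p => V p.1)),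
      Function.Surjective h ∧ Function.Injective g ∧ f = g.comp h := by
  have : IsArtinian H f.range := isArtinian_of_tower F inferInstance
  exact (stmt11_general V f fun W => hall W).imp' DFunLike.coe fun _ => id
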